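/- Let γ₁, γ₂, c ∈ ℂ be such that γ₁, γ₂, c, c−γ₁, and γ₁+γ₂−c are all not integers. Then there exists ε > 0 such that for all z, w ∈ ℂ with |z| < ε and |w| < ε, all series occurring below converge absolutely and (c−γ₁−γ₂)(γ₁−c) = c(γ₁−c)·Φ₂(γ₁,γ₂;1+γ₁+γ₂−c;−zw,−w)·Φ₂(−γ₁,−γ₂;1−γ₁−γ₂+c;zw,w) + γ₁(c−γ₁−γ₂)·Φ₁(c,γ₂;1+c−γ₁;z,−zw)·Φ₁(−c,−γ₂;1−c+γ₁;z,zw) + cγ₂·Γ₁(γ₁,c−γ₁,γ₁+γ₂−c;−z,w)·Γ₁(−γ₁,−c+γ₁,−γ₁−γ₂+c;−z,−w). -/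

import Mathlib

/-! The coefficient of every monomial `z ^ a * w ^ b` on the right-hand side is computed and shown to
vanish for `(a, b) ≠ (0, 0)`. Write `g = γ₁`, `h = γ₂`, `e = γ₁ + γ₂ - c`, `f = c - γ₁`, so that
`f + e = h` and `g + f = c`. Three facts are used.

In each of the three products the two factors have opposite parameters. By the reflection formula
for the Gamma function, products such as `(t)ₖ (-t)ₗ` with `k + l` fixed are, up to sign, a polynomial
in `k` or the reciprocal of one (`pochZ_mul_pos`, `pochZ_mul_nonpos`). Hence the coefficients of the
Cauchy products are finite sums of values of rational functions at integer points.

The residues of a rational function that is `O(x ^ (-2))` at infinity sum to zero (`residue_sum`, a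
form of Lagrange interpolation). A rational function with poles at `0, …, p` and at `u, …, u + q`
therefore turns a sum over the first set of poles into one over the second. This transforms the
coefficients of the `Γ₁` product into those of the `Φ₂` product if `a < b` (`coeff_lt`) and of the
`Φ₁` product if `a > b` (`coeff_gt`). For `a = b` a partial fraction decomposition first splits them
into two parts, one for each (`coeff_diag`).

Finally the coefficients of all six series are bounded by `R ^ (m + n)` (`exists_radius`), so near the
origin the products can be expanded and rearranged, which leaves the constant term.
-/

/-- The rising factorial (Pochhammer symbol) `(a)ₙ` for a natural number `n`. -/
noncomputable def pochN (a : ℂ) (m : ℕ) : ℂ := (ascPochhammer ℂ m).eval a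

/-- The shifted Pochhammer symbol `(a)ₛ = Γ(a+s)/Γ(a)` for an integer shift `s`. -/
noncomputable def pochZ (a : ℂ) (s : ℤ) : ℂ := Complex.Gamma (a + s) / Complex.Gamma a

/-- The `(m, n)`-th term of Horn's confluent series `Φ₁(α,β;γ;x,y)`. -/
noncomputable def hornPhi1Term (a b c x y : ℂ) (p : ℕ × ℕ) : ℂ :=
  pochN a (p.1 + p.2) * pochN b p.1 /
    (pochN c (p.1 + p.2) * (p.1.factorial : ℂ) * (p.2.factorial : ℂ)) * x ^ p.1 * y ^ p.2

/-- Horn's confluent series `Φ₁(α,β;γ;x,y)`. -/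
noncomputable def hornPhi1 (a b c x y : ℂ) : ℂ := ∑' p : ℕ × ℕ, hornPhi1Term a b c x y p

/-- The `(m, n)`-th term of Horn's confluent series `Φ₂(β₁,β₂;γ;x,y)`. -/
noncomputable def hornPhi2Term (b₁ b₂ c x y : ℂ) (p : ℕ × ℕ) : ℂ :=
  pochN b₁ p.1 * pochN b₂ p.2 /
    (pochN c (p.1 + p.2) * (p.1.factorial : ℂ) * (p.2.factorial : ℂ)) * x ^ p.1 * y ^ p.2

/-- Horn's confluent series `Φ₂(β₁,β₂;γ;x,y)`. -/
noncomputable def hornPhi2 (b₁ b₂ c x y : ℂ) : ℂ := ∑' p : ℕ × ℕ, hornPhi2Term b₁ b₂ c x y p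

/-- The `(m, n)`-th term of Horn's confluent series `Γ₁(α,β₁,β₂;x,y)`. -/
noncomputable def hornGamma1Term (a b₁ b₂ x y : ℂ) (p : ℕ × ℕ) : ℂ :=
  pochN a p.1 * pochZ b₁ ((p.2 : ℤ) - (p.1 : ℤ)) * pochZ b₂ ((p.1 : ℤ) - (p.2 : ℤ)) /
    ((p.1.factorial : ℂ) * (p.2.factorial : ℂ)) * x ^ p.1 * y ^ p.2

/-- Horn's confluent series `Γ₁(α,β₁,β₂;x,y)`. -/
noncomputable def hornGamma1 (a b₁ b₂ x y : ℂ) : ℂ := ∑' p : ℕ × ℕ, hornGamma1Term a b₁ b₂ x y p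

section

open Finset Polynomial

/-! ### Pochhammer symbols -/

/-- A complex number that is not an integer. -/
def NonInt (a : ℂ) : Prop := ∀ m : ℤ, a ≠ (m : ℂ)

namespace NonInt

lemma add_int {a : ℂ} (h : NonInt a) (k : ℤ) : NonInt (a + k) := by
  intro m hm
  apply h (m - k)
  push_cast
  rw [← hm]; ring

lemma neg {a : ℂ} (h : NonInt a) : NonInt (-a) := by
  intro m hm
  apply h (-m)
  push_cast
  rw [← hm]; ring

lemma ne_zero {a : ℂ} (h : NonInt a) : a ≠ 0 := by simpa using h 0

lemma one_add {a : ℂ} (h : NonInt a) : NonInt (1 + a) := by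
  simpa [add_comm] using h.add_int 1

lemma Gamma_ne_zero {a : ℂ} (h : NonInt a) : Complex.Gamma a ≠ 0 :=
  Complex.Gamma_ne_zero fun m => by simpa using h (-m)

end NonInt

lemma pochN_zero (a : ℂ) : pochN a 0 = 1 := by simp [pochN]

lemma pochN_one (a : ℂ) : pochN a 1 = a := by simp [pochN]

lemma pochN_succ (a : ℂ) (n : ℕ) : pochN a (n + 1) = pochN a n * (a + n) :=
  ascPochhammer_succ_eval n a

lemma pochN_eq_prod (a : ℂ) (n : ℕ) : pochN a n = ∏ j ∈ range n, (a + j) := by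
  induction n with
  | zero => simp [pochN_zero]
  | succ n ih => rw [pochN_succ, prod_range_succ, ih]

lemma pochN_succ_left (a : ℂ) (n : ℕ) : pochN a (n + 1) = a * pochN (1 + a) n := by
  rw [pochN_eq_prod, pochN_eq_prod, prod_range_succ', mul_comm]
  congr 1
  · simp
  · refine prod_congr rfl fun j _ => ?_
    push_cast; ring

lemma pochN_ne_zero {a : ℂ} (h : NonInt a) (n : ℕ) : pochN a n ≠ 0 := by
  rw [pochN_eq_prod]
  exact prod_ne_zero_iff.2 fun j _ => (by simpa using (h.add_int j).ne_zero)

lemma pochN_reverse (x : ℂ) (n : ℕ) :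
    pochN (-x - n) (n + 1) = (-1) ^ (n + 1) * pochN x (n + 1) := by
  rw [pochN_eq_prod, pochN_eq_prod, ← prod_range_reflect, ← card_range (n + 1), ← prod_const,
    card_range, ← prod_mul_distrib]
  refine prod_congr rfl fun j hj => ?_
  have : j ≤ n := by simpa [Nat.lt_succ_iff] using hj
  rw [Nat.add_sub_cancel, Nat.cast_sub this]
  ring

lemma Gamma_add_nat {a : ℂ} (h : NonInt a) (n : ℕ) :
    Complex.Gamma (a + n) = pochN a n * Complex.Gamma a := by
  rw [pochN, ← Complex.Gamma_add_nat_div_Gamma_eq a fun k => by simpa using h (-k)]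
  field_simp [h.Gamma_ne_zero]

lemma pochZ_natCast {a : ℂ} (h : NonInt a) (n : ℕ) : pochZ a n = pochN a n := by
  rw [pochZ, Int.cast_natCast, Gamma_add_nat h]
  field_simp [h.Gamma_ne_zero]

/-- The reflection formula: `Γ(s)Γ(1-s)` changes by a sign under integer shifts of `s`. -/
lemma Gamma_reflect_shift {t : ℂ} (h : NonInt t) (k : ℤ) :
    Complex.Gamma (t + k) * Complex.Gamma (1 - t - k)
      = (-1) ^ k * (-t) * (Complex.Gamma t * Complex.Gamma (-t)) := by
  have e1 : Complex.Gamma (1 - t) = -t * Complex.Gamma (-t) := by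
    rw [← Complex.Gamma_add_one _ (neg_ne_zero.2 h.ne_zero)]; ring_nf
  have e2 : Complex.Gamma (t + k) * Complex.Gamma (1 - t - k)
      = (-1) ^ k * (Complex.Gamma t * Complex.Gamma (1 - t)) := by
    rw [sub_sub, Complex.Gamma_mul_Gamma_one_sub, Complex.Gamma_mul_Gamma_one_sub, mul_add,
      mul_comm (Real.pi : ℂ) (k : ℂ),
      show ∀ x : ℂ, Complex.sin (x + k * Real.pi) = (-1) ^ k * Complex.sin x from
        fun x => by rw [Complex.sin_antiperiodic.add_int_mul_eq k, Int.cast_negOnePow]]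
    rcases Int.even_or_odd k with hk | hk
    · simp [hk.neg_one_zpow]
    · simp [hk.neg_one_zpow, div_neg]
  rw [e2, e1]; ring

/-- With a positive total shift, `(t)ₖ(-t)_{D+1-k}` is a polynomial in `k` up to sign. -/
lemma pochZ_mul_pos {t : ℂ} (h : NonInt t) (D : ℕ) (k l : ℤ) (hkl : k + l = D + 1) :
    pochZ t k * pochZ (-t) l = (-1) ^ k * (-t) * pochN (1 - t - k) D := by
  have hn : NonInt (1 - t - k) := by
    simpa [sub_eq_add_neg, add_assoc, add_comm, add_left_comm] using h.neg.add_int (1 - k)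
  have e : (-t + l : ℂ) = (1 - t - k) + D := by
    have : (k + l : ℂ) = D + 1 := by exact_mod_cast hkl
    linear_combination this
  rw [pochZ, pochZ, e, Gamma_add_nat hn, div_mul_div_comm,
    div_eq_iff (mul_ne_zero h.Gamma_ne_zero h.neg.Gamma_ne_zero)]
  linear_combination pochN (1 - t - k) D * Gamma_reflect_shift h k

/-- With a nonpositive total shift, `(t)ₖ(-t)_{-D-k}` is the reciprocal of a polynomial in `k`
up to sign. -/
lemma pochZ_mul_nonpos {t : ℂ} (h : NonInt t) (D : ℕ) (k l : ℤ) (hkl : k + l = -D) :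
    pochZ t k * pochZ (-t) l
      = (-1) ^ (D + 1) * (-1) ^ k * (-t) / pochN (t + k) (D + 1) := by
  have hn : NonInt (-t + l) := h.neg.add_int l
  have e : (1 - t - k : ℂ) = (-t + l) + (D + 1 : ℕ) := by
    have : (k + l : ℂ) = -D := by exact_mod_cast hkl
    push_cast
    linear_combination -this
  have e' : (-t + l : ℂ) = -(t + k) - D := by
    push_cast at e
    linear_combination -e
  have hr := Gamma_reflect_shift h k
  have hp : pochN (t + k) (D + 1) ≠ 0 := pochN_ne_zero (h.add_int k) _
  have hs : ((-1 : ℂ) ^ (D + 1)) * (-1) ^ (D + 1) = 1 := by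
    rw [← mul_pow]; simp
  rw [e, Gamma_add_nat hn, show pochN (-t + l) (D + 1) = _ by rw [e', pochN_reverse]] at hr
  rw [pochZ, pochZ, div_mul_div_comm, div_eq_div_iff
    (mul_ne_zero h.Gamma_ne_zero h.neg.Gamma_ne_zero) hp]
  linear_combination (-1) ^ (D + 1) * hr -
    Complex.Gamma (t + k) * Complex.Gamma (-t + l) * pochN (t + k) (D + 1) * hs

lemma pochN_mul_neg {t : ℂ} (h : NonInt t) {D i j : ℕ} (hij : i + j = D + 1) :
    pochN t i * pochN (-t) j = (-1) ^ i * (-t) * pochN (1 - t - i) D := by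
  have := pochZ_mul_pos h D i j (by exact_mod_cast hij)
  rwa [pochZ_natCast h, pochZ_natCast h.neg, zpow_natCast, Int.cast_natCast] at this

lemma pochN_one_add_mul {t : ℂ} (h : NonInt t) {n i j : ℕ} (hij : i + j = n) :
    pochN (1 + t) i * pochN (1 - t) j = (-1) ^ (i + 1) * pochN (-t - i) (n + 1) / t := by
  have := pochN_mul_neg h (D := n + 1) (i := i + 1) (j := j + 1) (by omega)
  rw [pochN_succ_left, pochN_succ_left, show (1 - t - (i + 1 : ℕ) : ℂ) = -t - i by push_cast; ring,
    show 1 + -t = 1 - t by ring] at this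
  rw [eq_div_iff h.ne_zero]
  apply mul_left_cancel₀ (neg_ne_zero.2 h.ne_zero)
  linear_combination this

/-! ### Residues -/

lemma prod_erase_sub (i k : ℕ) :
    ∏ j ∈ (range (i + k + 1)).erase i, ((i : ℂ) - j)
      = (-1) ^ k * (i.factorial : ℂ) * (k.factorial : ℂ) := by
  induction k with
  | zero =>
    rw [add_zero, range_add_one, erase_insert (by simp)]
    rw [← prod_range_reflect]
    simp only [pow_zero, one_mul, Nat.factorial_zero, Nat.cast_one, mul_one]
    rw [← prod_range_add_one_eq_factorial, Nat.cast_prod]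
    refine prod_congr rfl fun j hj => ?_
    have hj : j < i := by simpa using hj
    rw [Nat.sub_sub, Nat.cast_sub (by omega)]
    push_cast; ring
  | succ k ih =>
    rw [show i + (k + 1) + 1 = (i + k + 1) + 1 by ring, range_add_one,
      erase_insert_of_ne (by omega), prod_insert (by simp), ih, Nat.factorial_succ]
    push_cast; ring

/-- Partial fractions: for a polynomial `P` of degree at most `p + q`, the residues of
`P(x) / (∏_{i ≤ p} (x - i) · ∏_{l ≤ q} (x - u - l))` sum to zero. A pair `(i, p - i)` of the first
antidiagonal stands for the pole `x = i`, a pair `(l, q - l)` of the second for `x = u + l`. -/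
lemma residue_sum (p q : ℕ) {u : ℂ} (hu : NonInt u) (P : ℂ[X]) (hP : P.natDegree ≤ p + q) :
    ∑ i ∈ antidiagonal p, (-1) ^ i.2 * (-1) ^ (q + 1) * P.eval (i.1 : ℂ) /
        ((i.1.factorial : ℂ) * (i.2.factorial : ℂ) * pochN (u - i.1) (q + 1))
      + ∑ l ∈ antidiagonal q, (-1) ^ l.2 * (-1) ^ (p + 1) * P.eval (u + l.1) /
        ((l.1.factorial : ℂ) * (l.2.factorial : ℂ) * pochN (-u - l.1) (p + 1)) = 0 := by
  classical
  set s : Finset (ℕ ⊕ ℕ) := (range (p + 1)).disjSum (range (q + 1)) with hs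
  let v : ℕ ⊕ ℕ → ℂ := Sum.elim (fun i => (i : ℂ)) (fun l => u + l)
  have hcard : #s = p + q + 2 := by simp [hs]; ring
  have hv : Set.InjOn v s := by
    rintro (i | i) - (j | j) - hij
    · simpa [v] using hij
    · exact absurd (show u = ((i - j : ℤ) : ℂ) by
        simp only [v, Sum.elim_inl, Sum.elim_inr] at hij; push_cast; rw [hij]; ring) (hu _)
    · exact absurd (show u = ((j - i : ℤ) : ℂ) by
        simp only [v, Sum.elim_inl, Sum.elim_inr] at hij; push_cast; rw [← hij]; ring) (hu _)
    · simpa [v] using hij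
  have hdeg : P.degree < #s := by
    rw [hcard]
    exact lt_of_le_of_lt degree_le_natDegree (by exact_mod_cast (by omega))
  -- the sum of residues is the coefficient of degree `p + q + 1` in the Lagrange interpolation of `P`
  have key := Lagrange.coeff_eq_sum hv hdeg
  rw [coeff_eq_zero_of_natDegree_lt (by omega), hs, sum_disjSum] at key
  rw [key, Nat.sum_antidiagonal_eq_sum_range_succ_mk, Nat.sum_antidiagonal_eq_sum_range_succ_mk]
  have hinv : ∀ n : ℕ, (((-1 : ℂ)) ^ n)⁻¹ = (-1) ^ n := fun n => by rw [← inv_pow]; norm_num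
  have hprod : ∀ (x : ℂ) (n : ℕ), ∏ j ∈ range n, (x - j) = (-1) ^ n * pochN (-x) n := by
    intro x n
    nth_rewrite 2 [← card_range n]
    rw [pochN_eq_prod, ← prod_const, ← prod_mul_distrib]
    exact prod_congr rfl fun j _ => by ring
  congr 1
  · refine sum_congr rfl fun i hi => ?_
    obtain ⟨k, rfl⟩ : ∃ k, p = i + k := Nat.exists_eq_add_of_le (by simpa [Nat.lt_succ_iff] using hi)
    have herase : ((range (i + k + 1)).disjSum (range (q + 1))).erase (Sum.inl i)
        = ((range (i + k + 1)).erase i).disjSum (range (q + 1)) := by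
      ext (x | x) <;> simp
    have h2 : ∏ l ∈ range (q + 1), ((i : ℂ) - (u + l))
        = (-1) ^ (q + 1) * pochN (u - i) (q + 1) := by
      rw [← neg_sub (i : ℂ) u, ← hprod]
      exact prod_congr rfl fun j _ => by ring
    rw [herase, prod_disjSum]
    simp only [v, Sum.elim_inl, Sum.elim_inr, Nat.add_sub_cancel_left]
    rw [prod_erase_sub, h2]
    simp only [div_eq_mul_inv, mul_inv, hinv]
    ring
  · refine sum_congr rfl fun i hi => ?_
    obtain ⟨k, rfl⟩ : ∃ k, q = i + k :=
      Nat.exists_eq_add_of_le (by simpa [Nat.lt_succ_iff] using hi)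
    have herase : ((range (p + 1)).disjSum (range (i + k + 1))).erase (Sum.inr i)
        = (range (p + 1)).disjSum ((range (i + k + 1)).erase i) := by
      ext (x | x) <;> simp
    have h2 : ∏ l ∈ range (p + 1), (u + i - (l : ℂ))
        = (-1) ^ (p + 1) * pochN (-u - i) (p + 1) := by
      rw [hprod, neg_add']
    have h3 : ∏ j ∈ (range (i + k + 1)).erase i, (u + i - (u + j))
        = ∏ j ∈ (range (i + k + 1)).erase i, ((i : ℂ) - j) :=
      prod_congr rfl fun j _ => by ring
    rw [herase, prod_disjSum]
    simp only [v, Sum.elim_inl, Sum.elim_inr, Nat.add_sub_cancel_left]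
    rw [h3, prod_erase_sub, h2]
    simp only [div_eq_mul_inv, mul_inv, hinv]
    ring

/-! ### Coefficients of the three products -/

/-- The four Gamma quotients in a coefficient of the `Γ₁` product, when the exponent of `w` exceeds
that of `z`: a polynomial over a polynomial, both depending on `j - i` only. -/
lemma bracket_pos {f e : ℂ} (hf : NonInt f) (he : NonInt e) {D i i' j j' : ℕ}
    (hij : j + j' = i + i' + (D + 1)) :
    pochZ f ((j : ℤ) - i) * pochZ (-f) ((j' : ℤ) - i') *
        (pochZ e ((i : ℤ) - j) * pochZ (-e) ((i' : ℤ) - j'))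
      = (-1) ^ D * (f * e) * pochN (1 - f - j + i) D / pochN (e + i - j) (D + 2) := by
  rw [pochZ_mul_pos hf D _ _ (by omega), pochZ_mul_nonpos he (D + 1) _ _ (by push_cast; omega),
    ← neg_sub (j : ℤ) i, zpow_neg]
  have h1 : ((-1 : ℂ) ^ ((j : ℤ) - i)) ≠ 0 := zpow_ne_zero _ (by norm_num)
  have h2 : (1 - f - ((j - i : ℤ) : ℂ)) = 1 - f - j + i := by push_cast; ring
  have h3 : (e + ((-(j - i) : ℤ) : ℂ)) = e + i - j := by push_cast; ring
  rw [h2, h3, pow_add]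
  field_simp
  ring

/-- The four Gamma quotients when the exponent of `z` exceeds that of `w`. -/
lemma bracket_neg {f e : ℂ} (hf : NonInt f) (he : NonInt e) {D i i' j j' : ℕ}
    (hij : i + i' = j + j' + (D + 1)) :
    pochZ f ((j : ℤ) - i) * pochZ (-f) ((j' : ℤ) - i') *
        (pochZ e ((i : ℤ) - j) * pochZ (-e) ((i' : ℤ) - j'))
      = (-1) ^ D * (f * e) * pochN (1 - e - i + j) D / pochN (f + j - i) (D + 2) := by
  rw [mul_comm, bracket_pos he hf hij, mul_comm f e]

/-- The four Gamma quotients when the exponents of `z` and `w` agree. -/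
lemma bracket_zero {f e : ℂ} (hf : NonInt f) (he : NonInt e) {i i' j j' : ℕ}
    (hij : i + i' = j + j') :
    pochZ f ((j : ℤ) - i) * pochZ (-f) ((j' : ℤ) - i') *
        (pochZ e ((i : ℤ) - j) * pochZ (-e) ((i' : ℤ) - j'))
      = f * e / ((f + j - i) * (e + i - j)) := by
  rw [pochZ_mul_nonpos hf 0 _ _ (by push_cast; omega),
    pochZ_mul_nonpos he 0 _ _ (by push_cast; omega), ← neg_sub (j : ℤ) i, zpow_neg]
  have h1 : ((-1 : ℂ) ^ ((j : ℤ) - i)) ≠ 0 := zpow_ne_zero _ (by norm_num)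
  have h2 : (f + ((j - i : ℤ) : ℂ)) = f + j - i := by push_cast; ring
  have h3 : (e + ((-(j - i) : ℤ) : ℂ)) = e + i - j := by push_cast; ring
  have h4 : f + j - i ≠ 0 := by rw [← h2]; exact (hf.add_int _).ne_zero
  have h5 : e + i - j ≠ 0 := by rw [← h3]; exact (he.add_int _).ne_zero
  rw [h2, h3, zero_add, pochN_one, pochN_one]
  field_simp

/-- The coefficient at `(M, N)` of the Cauchy product of two double series. -/
noncomputable def cauchy (F G : ℕ × ℕ → ℂ) (M N : ℕ) : ℂ :=
  ∑ i ∈ antidiagonal M, ∑ j ∈ antidiagonal N, F (i.1, j.1) * G (i.2, j.2)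

lemma inv_neg_one_pow (n : ℕ) : (((-1 : ℂ)) ^ n)⁻¹ = (-1) ^ n := by rw [← inv_pow]; norm_num

/-- The product `(g)_{i₁}(-g)_{i₂} / (i₁! i₂!)`, which occurs in every Cauchy product below. -/
noncomputable def pairCoeff (g : ℂ) (i : ℕ × ℕ) : ℂ :=
  pochN g i.1 * pochN (-g) i.2 / ((i.1.factorial : ℂ) * (i.2.factorial : ℂ))

lemma pairCoeff_zero (g : ℂ) : pairCoeff g (0, 0) = 1 := by simp [pairCoeff, pochN_zero]

lemma pairCoeff_eq {g : ℂ} (hg : NonInt g) {D : ℕ} {i : ℕ × ℕ} (hi : i.1 + i.2 = D + 1) :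
    pairCoeff g i = (-1) ^ i.1 * (-g) * pochN (1 - g - i.1) D /
      ((i.1.factorial : ℂ) * (i.2.factorial : ℂ)) := by
  rw [pairCoeff, pochN_mul_neg hg hi]

/-- The arguments `(-1, -1)` and `(1, 1)` are those of the relation at `z = w = 1`; the powers of
`z` and `w` are restored by `cauchy_scale`. -/
lemma cauchy_phi2 {g h e : ℂ} (he : NonInt e) (M N : ℕ) :
    cauchy (hornPhi2Term g h (1 + e) (-1) (-1)) (hornPhi2Term (-g) (-h) (1 - e) 1 1) M N
      = ∑ i ∈ antidiagonal M, ∑ l ∈ antidiagonal N,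
        -(pairCoeff g i * pairCoeff h l * e / pochN (-e - i.1 - l.1) (M + N + 1)) := by
  refine sum_congr rfl fun i hi => sum_congr rfl fun l hl => ?_
  rw [HasAntidiagonal.mem_antidiagonal] at hi hl
  have key := pochN_one_add_mul he (n := M + N) (i := i.1 + l.1) (j := i.2 + l.2) (by omega)
  calc _ = pairCoeff g i * pairCoeff h l * (-1) ^ i.1 * (-1) ^ l.1 *
        (pochN (1 + e) (i.1 + l.1) * pochN (1 - e) (i.2 + l.2))⁻¹ := by
        simp only [hornPhi2Term, pairCoeff, div_eq_mul_inv, mul_inv, one_pow]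
        ring
    _ = _ := by
        rw [key]
        simp only [div_eq_mul_inv, mul_inv, inv_inv, inv_neg_one_pow, pow_add]
        push_cast
        rw [← sub_sub]
        rcases neg_one_pow_eq_or ℂ i.1 with h1 | h1 <;>
        rcases neg_one_pow_eq_or ℂ l.1 with h2 | h2 <;>
        rw [h1, h2] <;> ring

lemma cauchy_phi1 {c h f : ℂ} (hf : NonInt f) (hc : NonInt c) (M N A : ℕ) (hA : M + N = A + 1) :
    cauchy (hornPhi1Term c h (1 + f) 1 (-1)) (hornPhi1Term (-c) (-h) (1 - f) 1 1) M N
      = ∑ l ∈ antidiagonal M, ∑ j ∈ antidiagonal N,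
        c * f * (-1) ^ j.1 * pairCoeff h l * pochN (1 - c - l.1 - j.1) A /
          ((j.1.factorial : ℂ) * (j.2.factorial : ℂ) * pochN (-f - l.1 - j.1) (A + 2)) := by
  refine sum_congr rfl fun l hl => sum_congr rfl fun j hj => ?_
  rw [HasAntidiagonal.mem_antidiagonal] at hl hj
  have key := pochN_one_add_mul hf (n := A + 1) (i := l.1 + j.1) (j := l.2 + j.2) (by omega)
  have key' := pochN_mul_neg hc (D := A) (i := l.1 + j.1) (j := l.2 + j.2) (by omega)
  calc _ = (pochN c (l.1 + j.1) * pochN (-c) (l.2 + j.2)) * pairCoeff h l * (-1) ^ j.1 /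
          ((j.1.factorial : ℂ) * (j.2.factorial : ℂ)) *
        (pochN (1 + f) (l.1 + j.1) * pochN (1 - f) (l.2 + j.2))⁻¹ := by
        simp only [hornPhi1Term, pairCoeff, div_eq_mul_inv, mul_inv, one_pow]
        ring
    _ = _ := by
        rw [key, key']
        simp only [div_eq_mul_inv, mul_inv, inv_inv, inv_neg_one_pow, pow_add]
        push_cast
        rw [← sub_sub, ← sub_sub]
        rcases neg_one_pow_eq_or ℂ l.1 with h1 | h1 <;>
        rcases neg_one_pow_eq_or ℂ j.1 with h2 | h2 <;>
        rw [h1, h2] <;> ring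

/-- The terms of the `Γ₁` product, with the dependence on `i` and `j` separated from the Gamma
quotients. -/
lemma gamma1_term_mul (g f e : ℂ) {a : ℕ} {i j : ℕ × ℕ} (hi : i.1 + i.2 = a) :
    hornGamma1Term g f e (-1) 1 (i.1, j.1) * hornGamma1Term (-g) (-f) (-e) (-1) (-1) (i.2, j.2)
      = pairCoeff g i * (-1) ^ a * (-1) ^ j.2 / ((j.1.factorial : ℂ) * (j.2.factorial : ℂ)) *
        (pochZ f ((j.1 : ℤ) - i.1) * pochZ (-f) ((j.2 : ℤ) - i.2) *
          (pochZ e ((i.1 : ℤ) - j.1) * pochZ (-e) ((i.2 : ℤ) - j.2))) := by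
  simp only [hornGamma1Term, pairCoeff, div_eq_mul_inv, mul_inv, one_pow, ← hi, pow_add]
  ring

lemma eval_comp_pochN (b x : ℂ) (D : ℕ) :
    ((ascPochhammer ℂ D).comp (C b - X)).eval x = pochN (b - x) D := by
  simp [pochN]

lemma natDegree_comp_pochN (b : ℂ) (D : ℕ) :
    ((ascPochhammer ℂ D).comp (C b - X)).natDegree ≤ D := by
  refine natDegree_comp_le.trans ?_
  rw [ascPochhammer_natDegree]
  have : (C b - X : ℂ[X]).natDegree ≤ 1 := by
    refine (natDegree_sub_le _ _).trans ?_
    simp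
  nlinarith

/-! ### Cancellation of the coefficients -/

/-- The coefficient of `z ^ a * w ^ (a + D + 1)`, divided by `c`. The `Φ₁` product does not
contribute, since its monomials are `z ^ (M + N) * w ^ N`. -/
lemma coeff_lt {g h e f : ℂ} (hh : NonInt h) (he : NonInt e) (hf : NonInt f)
    (hfe : f + e = h) (a D : ℕ) :
    -f * cauchy (hornPhi2Term g h (1 + e) (-1) (-1)) (hornPhi2Term (-g) (-h) (1 - e) 1 1) a (D + 1)
      + h * cauchy (hornGamma1Term g f e (-1) 1) (hornGamma1Term (-g) (-f) (-e) (-1) (-1))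
          a (a + (D + 1)) = 0 := by
  rw [cauchy_phi2 he, cauchy, mul_sum, mul_sum, ← sum_add_distrib]
  refine sum_eq_zero fun i hi => ?_
  rw [HasAntidiagonal.mem_antidiagonal] at hi
  -- for fixed `i`, the poles `x = j` give the `Γ₁` product and the poles `x = e + i + l` the `Φ₂` one
  have res := residue_sum (a + (D + 1)) (D + 1) (u := e + i.1) (by simpa using he.add_int i.1)
    ((ascPochhammer ℂ D).comp (C (1 - f + i.1) - X))
    ((natDegree_comp_pochN _ D).trans (by omega))
  simp only [eval_comp_pochN] at res
  have e1 : ∑ j ∈ antidiagonal (a + (D + 1)), hornGamma1Term g f e (-1) 1 (i.1, j.1) *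
        hornGamma1Term (-g) (-f) (-e) (-1) (-1) (i.2, j.2)
      = pairCoeff g i * (-1) ^ a * (f * e) * (-1) ^ D * (-1) ^ (D + 1 + 1) *
        ∑ j ∈ antidiagonal (a + (D + 1)), (-1) ^ j.2 * (-1) ^ (D + 1 + 1) *
          pochN (1 - f + i.1 - j.1) D /
        ((j.1.factorial : ℂ) * (j.2.factorial : ℂ) * pochN (e + i.1 - j.1) (D + 1 + 1)) := by
    rw [mul_sum]
    refine sum_congr rfl fun j hj => ?_
    rw [HasAntidiagonal.mem_antidiagonal] at hj
    rw [gamma1_term_mul g f e hi, bracket_pos hf he (D := D) (by omega),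
      show 1 - f + (i.1 : ℂ) - j.1 = 1 - f - j.1 + i.1 by ring]
    simp only [div_eq_mul_inv, mul_inv, pow_add]
    rcases neg_one_pow_eq_or ℂ D with h1 | h1 <;> rw [h1] <;> ring
  rw [e1, eq_neg_of_add_eq_zero_left res]
  simp only [mul_sum, ← sum_neg_distrib, ← sum_add_distrib]
  refine sum_eq_zero fun l hl => ?_
  rw [HasAntidiagonal.mem_antidiagonal] at hl
  rw [pairCoeff_eq hh hl, show 1 - f + (i.1 : ℂ) - (e + i.1 + l.1) = 1 - h - l.1 by
    rw [← hfe]; ring, show -(e + (i.1 : ℂ)) - l.1 = -e - i.1 - l.1 by ring]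
  have hs : (-1 : ℂ) ^ (D + 1) = (-1) ^ l.1 * (-1) ^ l.2 := by rw [← hl, pow_add]
  simp only [div_eq_mul_inv, mul_inv, pow_add _ a, pow_succ _ (D + 1), pow_succ _ (a + (D + 1)), hs]
  rw [pow_succ] at hs
  rw [show (-1 : ℂ) ^ D = -((-1) ^ l.1 * (-1) ^ l.2) by rw [← hs]; ring]
  rcases neg_one_pow_eq_or ℂ l.1 with h1 | h1 <;>
  rcases neg_one_pow_eq_or ℂ l.2 with h2 | h2 <;>
  rcases neg_one_pow_eq_or ℂ a with h3 | h3 <;>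
  rw [h1, h2, h3] <;> ring

/-- The coefficient of `z ^ (b + D + 1) * w ^ b`. The `Φ₂` product does not contribute, since its
monomials are `z ^ M * w ^ (M + N)`. -/
lemma coeff_gt {g h e f c : ℂ} (hg : NonInt g) (hh : NonInt h) (he : NonInt e) (hf : NonInt f)
    (hc : NonInt c) (hfe : f + e = h) (hgf : g + f = c) (b D : ℕ) :
    -(g * e) * cauchy (hornPhi1Term c h (1 + f) 1 (-1)) (hornPhi1Term (-c) (-h) (1 - f) 1 1)
        (D + 1) b
      + c * h * cauchy (hornGamma1Term g f e (-1) 1) (hornGamma1Term (-g) (-f) (-e) (-1) (-1))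
          (b + (D + 1)) b = 0 := by
  rw [cauchy_phi1 hf hc (D + 1) b (b + D) (by omega), cauchy, sum_comm]
  conv_lhs => enter [2, 2]; rw [sum_comm]
  rw [mul_sum, mul_sum, ← sum_add_distrib]
  refine sum_eq_zero fun j hj => ?_
  rw [HasAntidiagonal.mem_antidiagonal] at hj
  -- for fixed `j`, the poles `x = i` give the `Γ₁` product and the poles `x = f + j + l` the `Φ₁` one
  have res := residue_sum (b + (D + 1)) (D + 1) (u := f + j.1) (by simpa using hf.add_int j.1)
    ((ascPochhammer ℂ (b + D)).comp (C (1 - g) - X) *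
      (ascPochhammer ℂ D).comp (C (1 - e + j.1) - X))
    (natDegree_mul_le.trans ((add_le_add (natDegree_comp_pochN _ _)
      (natDegree_comp_pochN _ _)).trans (by omega)))
  simp only [eval_mul, eval_comp_pochN] at res
  have e1 : ∑ i ∈ antidiagonal (b + (D + 1)), hornGamma1Term g f e (-1) 1 (i.1, j.1) *
        hornGamma1Term (-g) (-f) (-e) (-1) (-1) (i.2, j.2)
      = (-1) ^ j.2 / ((j.1.factorial : ℂ) * (j.2.factorial : ℂ)) * (-g) * (f * e) *
        ∑ i ∈ antidiagonal (b + (D + 1)), (-1) ^ i.2 * (-1) ^ (D + 1 + 1) *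
          (pochN (1 - g - i.1) (b + D) * pochN (1 - e + j.1 - i.1) D) /
        ((i.1.factorial : ℂ) * (i.2.factorial : ℂ) * pochN (f + j.1 - i.1) (D + 1 + 1)) := by
    rw [mul_sum]
    refine sum_congr rfl fun i hi => ?_
    rw [HasAntidiagonal.mem_antidiagonal] at hi
    rw [gamma1_term_mul g f e hi, bracket_neg hf he (D := D) (by omega),
      pairCoeff_eq hg (D := b + D) (by omega),
      show 1 - e + (j.1 : ℂ) - i.1 = 1 - e - i.1 + j.1 by ring, ← hi]
    simp only [div_eq_mul_inv, mul_inv, pow_add]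
    rcases neg_one_pow_eq_or ℂ i.1 with h1 | h1 <;>
    rcases neg_one_pow_eq_or ℂ i.2 with h2 | h2 <;> rw [h1, h2] <;> ring
  rw [e1, eq_neg_of_add_eq_zero_left res]
  simp only [mul_sum, ← sum_neg_distrib, ← sum_add_distrib]
  refine sum_eq_zero fun l hl => ?_
  rw [HasAntidiagonal.mem_antidiagonal] at hl
  rw [pairCoeff_eq hh hl, show 1 - e + (j.1 : ℂ) - (f + j.1 + l.1) = 1 - h - l.1 by
    rw [← hfe]; ring, show -(f + (j.1 : ℂ)) - l.1 = -f - l.1 - j.1 by ring,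
    show 1 - g - (f + (j.1 : ℂ) + l.1) = 1 - c - l.1 - j.1 by rw [← hgf]; ring,
    show b + (D + 1) + 1 = b + D + 2 by ring]
  have hs : (-1 : ℂ) ^ (b + D + 2) = -((-1) ^ j.1 * (-1) ^ j.2 * ((-1) ^ l.1 * (-1) ^ l.2)) := by
    rw [show b + D + 2 = b + (D + 1) + 1 by ring, pow_succ, ← hl, pow_add, pow_add, ← hj, pow_add]
    ring
  rw [hs]
  simp only [div_eq_mul_inv, mul_inv]
  rcases neg_one_pow_eq_or ℂ l.1 with h1 | h1 <;>
  rcases neg_one_pow_eq_or ℂ l.2 with h2 | h2 <;>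
  rcases neg_one_pow_eq_or ℂ j.1 with h3 | h3 <;>
  rcases neg_one_pow_eq_or ℂ j.2 with h4 | h4 <;>
  rw [h1, h2, h3, h4] <;> ring

/-- The coefficient of `(z * w) ^ (A + 1)`. The Gamma quotients are
`f * e / ((f + j - i) * (e + i - j))`; since `f + e = h`, they split into simple fractions in
`f + j - i`, which produce the `Φ₁` part, and in `e + i - j`, which produce the `Φ₂` part. -/
lemma coeff_diag {g h e f c : ℂ} (hg : NonInt g) (he : NonInt e) (hf : NonInt f)
    (hc : NonInt c) (hfe : f + e = h) (hgf : g + f = c) (A : ℕ) :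
    -(c * f) * cauchy (hornPhi2Term g h (1 + e) (-1) (-1)) (hornPhi2Term (-g) (-h) (1 - e) 1 1)
        (A + 1) 0
      + -(g * e) * cauchy (hornPhi1Term c h (1 + f) 1 (-1)) (hornPhi1Term (-c) (-h) (1 - f) 1 1)
        0 (A + 1)
      + c * h * cauchy (hornGamma1Term g f e (-1) 1) (hornGamma1Term (-g) (-f) (-e) (-1) (-1))
          (A + 1) (A + 1) = 0 := by
  -- the contribution of the fractions `1 / (e + i - j)`
  have hY : ∑ i ∈ antidiagonal (A + 1), ∑ j ∈ antidiagonal (A + 1),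
      pairCoeff g i * (-1) ^ (A + 1) * (-1) ^ j.2 /
        ((j.1.factorial : ℂ) * (j.2.factorial : ℂ)) / (e + i.1 - j.1)
      = - ∑ i ∈ antidiagonal (A + 1), pairCoeff g i / pochN (-e - i.1) (A + 2) := by
    rw [← sum_neg_distrib]
    refine sum_congr rfl fun i hi => ?_
    have res := residue_sum (A + 1) 0 (u := e + i.1) (by simpa using he.add_int i.1) 1 (by simp)
    simp only [zero_add, pochN_one, Nat.antidiagonal_zero, sum_singleton, eval_one, pow_one, pow_zero,
      Nat.factorial_zero, Nat.cast_zero, Nat.cast_one, sub_zero, one_mul, mul_one] at res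
    calc _ = -(pairCoeff g i * (-1) ^ (A + 1)) * ∑ j ∈ antidiagonal (A + 1), (-1) ^ j.2 * -1 /
          ((j.1.factorial : ℂ) * (j.2.factorial : ℂ) * (e + i.1 - j.1)) := by
          rw [mul_sum]
          refine sum_congr rfl fun j _ => ?_
          simp only [div_eq_mul_inv, mul_inv]
          ring
      _ = _ := by
          rw [eq_neg_of_add_eq_zero_left res, show -(e + (i.1 : ℂ)) = -e - i.1 by ring,
            pow_succ _ (A + 1)]
          rcases neg_one_pow_eq_or ℂ (A + 1) with h1 | h1 <;> rw [h1] <;> ring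
  -- the contribution of the fractions `1 / (f + j - i)`
  have hX : ∑ i ∈ antidiagonal (A + 1), ∑ j ∈ antidiagonal (A + 1),
      pairCoeff g i * (-1) ^ (A + 1) * (-1) ^ j.2 /
        ((j.1.factorial : ℂ) * (j.2.factorial : ℂ)) / (f + j.1 - i.1)
      = ∑ j ∈ antidiagonal (A + 1), g * (-1) ^ j.1 * pochN (1 - c - j.1) A /
          ((j.1.factorial : ℂ) * (j.2.factorial : ℂ) * pochN (-f - j.1) (A + 2)) := by
    rw [sum_comm]
    refine sum_congr rfl fun j hj => ?_
    rw [HasAntidiagonal.mem_antidiagonal] at hj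
    have res := residue_sum (A + 1) 0 (u := f + j.1) (by simpa using hf.add_int j.1)
      ((ascPochhammer ℂ A).comp (C (1 - g) - X)) ((natDegree_comp_pochN _ A).trans (by omega))
    simp only [zero_add, pochN_one, Nat.antidiagonal_zero, sum_singleton, pow_one, pow_zero,
      Nat.factorial_zero, Nat.cast_zero, Nat.cast_one, sub_zero, one_mul, eval_comp_pochN,
      add_zero] at res
    calc _ = (g * (-1) ^ j.2 / ((j.1.factorial : ℂ) * (j.2.factorial : ℂ))) *
          ∑ i ∈ antidiagonal (A + 1), (-1) ^ i.2 * -1 * pochN (1 - g - i.1) A /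
          ((i.1.factorial : ℂ) * (i.2.factorial : ℂ) * (f + j.1 - i.1)) := by
          rw [mul_sum]
          refine sum_congr rfl fun i hi => ?_
          rw [HasAntidiagonal.mem_antidiagonal] at hi
          rw [pairCoeff_eq hg hi, ← hi]
          simp only [div_eq_mul_inv, mul_inv, pow_add]
          rcases neg_one_pow_eq_or ℂ i.1 with h1 | h1 <;>
          rcases neg_one_pow_eq_or ℂ i.2 with h2 | h2 <;> rw [h1, h2] <;> ring
      _ = _ := by
          rw [eq_neg_of_add_eq_zero_left res, show -(f + (j.1 : ℂ)) = -f - j.1 by ring,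
            show 1 - g - (f + (j.1 : ℂ)) = 1 - c - j.1 by rw [← hgf]; ring,
            pow_succ _ (A + 1)]
          have hs : (-1 : ℂ) ^ (A + 1) = (-1) ^ j.1 * (-1) ^ j.2 := by rw [← hj, pow_add]
          rw [hs]
          simp only [div_eq_mul_inv, mul_inv]
          rcases neg_one_pow_eq_or ℂ j.1 with h1 | h1 <;>
          rcases neg_one_pow_eq_or ℂ j.2 with h2 | h2 <;> rw [h1, h2] <;> ring
  have hG : h * cauchy (hornGamma1Term g f e (-1) 1) (hornGamma1Term (-g) (-f) (-e) (-1) (-1))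
        (A + 1) (A + 1)
      = f * e * (∑ i ∈ antidiagonal (A + 1), ∑ j ∈ antidiagonal (A + 1),
          pairCoeff g i * (-1) ^ (A + 1) * (-1) ^ j.2 /
            ((j.1.factorial : ℂ) * (j.2.factorial : ℂ)) / (f + j.1 - i.1)
        + ∑ i ∈ antidiagonal (A + 1), ∑ j ∈ antidiagonal (A + 1),
          pairCoeff g i * (-1) ^ (A + 1) * (-1) ^ j.2 /
            ((j.1.factorial : ℂ) * (j.2.factorial : ℂ)) / (e + i.1 - j.1)) := by
    simp only [cauchy, mul_add, mul_sum, ← sum_add_distrib]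
    refine sum_congr rfl fun i hi => sum_congr rfl fun j hj => ?_
    rw [HasAntidiagonal.mem_antidiagonal] at hi hj
    rw [gamma1_term_mul g f e hi, bracket_zero hf he (by omega), ← hfe]
    have h4 : f + (j.1 : ℂ) - i.1 ≠ 0 := by
      simpa [add_sub_assoc] using (hf.add_int ((j.1 : ℤ) - i.1)).ne_zero
    have h5 : e + (i.1 : ℂ) - j.1 ≠ 0 := by
      simpa [add_sub_assoc] using (he.add_int ((i.1 : ℤ) - j.1)).ne_zero
    have h6 : (j.1.factorial : ℂ) ≠ 0 := by exact_mod_cast Nat.factorial_ne_zero _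
    have h7 : (j.2.factorial : ℂ) ≠ 0 := by exact_mod_cast Nat.factorial_ne_zero _
    field_simp
    ring
  have hK2 : cauchy (hornPhi2Term g h (1 + e) (-1) (-1)) (hornPhi2Term (-g) (-h) (1 - e) 1 1)
      (A + 1) 0 = -e * ∑ i ∈ antidiagonal (A + 1), pairCoeff g i / pochN (-e - i.1) (A + 2) := by
    rw [cauchy_phi2 he, mul_sum]
    refine sum_congr rfl fun i _ => ?_
    simp only [Nat.antidiagonal_zero, sum_singleton, pairCoeff_zero, Nat.cast_zero, sub_zero]
    ring
  have hK1 : g * cauchy (hornPhi1Term c h (1 + f) 1 (-1)) (hornPhi1Term (-c) (-h) (1 - f) 1 1)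
      0 (A + 1) = c * f * ∑ j ∈ antidiagonal (A + 1), g * (-1) ^ j.1 * pochN (1 - c - j.1) A /
          ((j.1.factorial : ℂ) * (j.2.factorial : ℂ) * pochN (-f - j.1) (A + 2)) := by
    rw [cauchy_phi1 hf hc 0 (A + 1) A (by omega)]
    simp only [Nat.antidiagonal_zero, sum_singleton, pairCoeff_zero, Nat.cast_zero, sub_zero,
      mul_sum]
    exact sum_congr rfl fun j _ => by ring
  rw [hX, hY] at hG
  rw [hK2]
  linear_combination c * hG - e * hK1

/-! ### Absolute convergence -/

lemma NonInt.exists_norm_add_nat_ge {c : ℂ} (h : NonInt c) :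
    ∃ K : ℝ, 1 ≤ K ∧ ∀ k : ℕ, (k + 1 : ℝ) ≤ K * ‖c + k‖ := by
  -- `‖c + k‖ ≥ k / 2` eventually, and the finitely many remaining ratios are bounded
  obtain ⟨N, hN⟩ := exists_nat_ge (2 * ‖c‖ + 1)
  refine ⟨2 + ∑ k ∈ range N, (k + 1 : ℝ) / ‖c + k‖ + 2, ?_, fun k => ?_⟩
  · have : 0 ≤ ∑ k ∈ range N, (k + 1 : ℝ) / ‖c + k‖ := sum_nonneg fun _ _ => by positivity
    linarith
  have hS : ∀ s : Finset ℕ, 0 ≤ ∑ k ∈ s, (k + 1 : ℝ) / ‖c + k‖ :=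
    fun s => sum_nonneg fun _ _ => by positivity
  have hpos : 0 < ‖c + k‖ := norm_pos_iff.2 (by simpa using (h.add_int k).ne_zero)
  rcases lt_or_ge k N with hk | hk
  · have := single_le_sum (f := fun k : ℕ => (k + 1 : ℝ) / ‖c + k‖)
      (fun i _ => by positivity) (mem_range.2 hk)
    rw [← div_le_iff₀ hpos]
    linarith
  · have h1 : (k : ℝ) - ‖c‖ ≤ ‖c + k‖ := by
      have := norm_sub_norm_le (k : ℂ) (-c)
      simpa [add_comm] using this
    have h2 : (N : ℝ) ≤ k := by exact_mod_cast hk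
    nlinarith [hS (range N), norm_nonneg c]

lemma norm_pochN_le (a : ℂ) (n : ℕ) : ‖pochN a n‖ ≤ (‖a‖ + 1) ^ n * n.factorial := by
  induction n with
  | zero => simp [pochN_zero]
  | succ n ih =>
    rw [pochN_succ, norm_mul, pow_succ, Nat.factorial_succ]
    have h1 : ‖a + n‖ ≤ (‖a‖ + 1) * (n + 1) := by
      refine (norm_add_le _ _).trans ?_
      rw [Complex.norm_natCast]
      nlinarith [norm_nonneg a, (Nat.cast_nonneg n : (0 : ℝ) ≤ n)]
    calc _ ≤ (‖a‖ + 1) ^ n * n.factorial * ((‖a‖ + 1) * (n + 1)) := by gcongr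
      _ = _ := by push_cast; ring

/-- `(c)ₙ` is at least `n!` up to an exponential factor. -/
lemma NonInt.exists_factorial_div_le {c : ℂ} (h : NonInt c) :
    ∃ K : ℝ, 1 ≤ K ∧ ∀ n : ℕ, (n.factorial : ℝ) / ‖pochN c n‖ ≤ K ^ n := by
  obtain ⟨K, hK, hb⟩ := h.exists_norm_add_nat_ge
  refine ⟨K, hK, fun n => ?_⟩
  rw [div_le_iff₀ (norm_pos_iff.2 (pochN_ne_zero h n))]
  induction n with
  | zero => simp [pochN_zero]
  | succ n ih =>
    rw [pochN_succ, norm_mul, pow_succ, Nat.factorial_succ]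
    calc (((n + 1) * n.factorial : ℕ) : ℝ) = (n + 1 : ℝ) * n.factorial := by push_cast; ring
      _ ≤ (K * ‖c + n‖) * (K ^ n * ‖pochN c n‖) :=
        mul_le_mul (hb n) ih (by positivity) (by positivity)
      _ = _ := by ring

/-- A double power series with exponentially bounded coefficients converges absolutely near `0`. -/
lemma exists_radius {F : ℂ → ℂ → ℕ × ℕ → ℂ} (hF : ∀ x y p, F x y p = F 1 1 p * x ^ p.1 * y ^ p.2)
    {R : ℝ} (hR : 1 ≤ R) (hb : ∀ p, ‖F 1 1 p‖ ≤ R ^ (p.1 + p.2)) :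
    ∃ ε : ℝ, 0 < ε ∧ ∀ x y : ℂ, ‖x‖ < ε → ‖y‖ < ε → Summable fun p => ‖F x y p‖ := by
  have hR0 : 0 < R := by linarith
  refine ⟨R⁻¹, by positivity, fun x y hx hy => ?_⟩
  have key : ∀ t : ℂ, ‖t‖ < R⁻¹ → Summable fun n : ℕ => (R * ‖t‖) ^ n := by
    intro t ht
    refine summable_geometric_of_lt_one (by positivity) ?_
    rwa [mul_comm, ← lt_div_iff₀ hR0, one_div]
  refine Summable.of_nonneg_of_le (fun p => norm_nonneg _) (fun p => ?_)
    ((key x hx).mul_of_nonneg (key y hy) (fun n => by positivity) (fun n => by positivity))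
  rw [hF, norm_mul, norm_mul, norm_pow, norm_pow]
  calc ‖F 1 1 p‖ * ‖x‖ ^ p.1 * ‖y‖ ^ p.2 ≤ R ^ (p.1 + p.2) * ‖x‖ ^ p.1 * ‖y‖ ^ p.2 := by
        gcongr; exact hb p
    _ = _ := by rw [pow_add, mul_pow, mul_pow]; ring

lemma exists_radius_phi2 (b₁ b₂ : ℂ) {c : ℂ} (hc : NonInt c) :
    ∃ ε : ℝ, 0 < ε ∧ ∀ x y : ℂ, ‖x‖ < ε → ‖y‖ < ε →
      Summable fun p => ‖hornPhi2Term b₁ b₂ c x y p‖ := by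
  obtain ⟨K, hK, hb⟩ := hc.exists_factorial_div_le
  have hB₁ : 1 ≤ ‖b₁‖ + 1 := by simp
  have hB₂ : 1 ≤ ‖b₂‖ + 1 := by simp
  refine exists_radius (R := (‖b₁‖ + 1) * (‖b₂‖ + 1) * K) (fun x y p => by simp [hornPhi2Term])
    (one_le_mul_of_one_le_of_one_le (one_le_mul_of_one_le_of_one_le hB₁ hB₂) hK) ?_
  rintro ⟨m, n⟩
  have hm : (0 : ℝ) < m.factorial := by exact_mod_cast Nat.factorial_pos m
  have hn : (0 : ℝ) < n.factorial := by exact_mod_cast Nat.factorial_pos n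
  have h0 : 0 < ‖pochN c (m + n)‖ := norm_pos_iff.2 (pochN_ne_zero hc _)
  have h1 : (1 : ℝ) ≤ (m + n).factorial := by exact_mod_cast Nat.factorial_pos (m + n)
  simp only [hornPhi2Term, one_pow, mul_one, norm_div, norm_mul, Complex.norm_natCast]
  calc _ ≤ ((‖b₁‖ + 1) ^ m * m.factorial) * ((‖b₂‖ + 1) ^ n * n.factorial) /
          (‖pochN c (m + n)‖ * m.factorial * n.factorial) := by
        gcongr <;> apply norm_pochN_le
    _ = (‖b₁‖ + 1) ^ m * (‖b₂‖ + 1) ^ n * (1 / ‖pochN c (m + n)‖) := by field_simp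
    _ ≤ (‖b₁‖ + 1) ^ (m + n) * (‖b₂‖ + 1) ^ (m + n) *
          ((m + n).factorial / ‖pochN c (m + n)‖) := by
        gcongr <;> first | exact hB₁ | exact hB₂ | omega
    _ ≤ (‖b₁‖ + 1) ^ (m + n) * (‖b₂‖ + 1) ^ (m + n) * K ^ (m + n) := by
        gcongr; exact hb _
    _ = _ := by rw [mul_pow, mul_pow]

lemma exists_radius_phi1 (a b : ℂ) {c : ℂ} (hc : NonInt c) :
    ∃ ε : ℝ, 0 < ε ∧ ∀ x y : ℂ, ‖x‖ < ε → ‖y‖ < ε →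
      Summable fun p => ‖hornPhi1Term a b c x y p‖ := by
  obtain ⟨K, hK, hb⟩ := hc.exists_factorial_div_le
  have hA : 1 ≤ ‖a‖ + 1 := by simp
  have hB : 1 ≤ ‖b‖ + 1 := by simp
  refine exists_radius (R := (‖a‖ + 1) * (‖b‖ + 1) * K) (fun x y p => by simp [hornPhi1Term])
    (one_le_mul_of_one_le_of_one_le (one_le_mul_of_one_le_of_one_le hA hB) hK) ?_
  rintro ⟨m, n⟩
  have hm : (0 : ℝ) < m.factorial := by exact_mod_cast Nat.factorial_pos m
  have hn : (0 : ℝ) < n.factorial := by exact_mod_cast Nat.factorial_pos n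
  have h0 : 0 < ‖pochN c (m + n)‖ := norm_pos_iff.2 (pochN_ne_zero hc _)
  have h1 : (1 : ℝ) ≤ n.factorial := by exact_mod_cast Nat.factorial_pos n
  simp only [hornPhi1Term, one_pow, mul_one, norm_div, norm_mul, Complex.norm_natCast]
  calc _ ≤ ((‖a‖ + 1) ^ (m + n) * (m + n).factorial) * ((‖b‖ + 1) ^ m * m.factorial) /
          (‖pochN c (m + n)‖ * m.factorial * n.factorial) := by
        gcongr <;> apply norm_pochN_le
    _ = (‖a‖ + 1) ^ (m + n) * (‖b‖ + 1) ^ m * ((m + n).factorial / ‖pochN c (m + n)‖) /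
          n.factorial := by field_simp
    _ ≤ (‖a‖ + 1) ^ (m + n) * (‖b‖ + 1) ^ m * ((m + n).factorial / ‖pochN c (m + n)‖) :=
        div_le_self (by positivity) h1
    _ ≤ (‖a‖ + 1) ^ (m + n) * (‖b‖ + 1) ^ (m + n) * K ^ (m + n) := by
        gcongr
        · omega
        · exact hb _
    _ = _ := by rw [mul_pow, mul_pow]

lemma norm_pochZ_neg {b : ℂ} (h : NonInt b) (n : ℕ) :
    ‖pochZ b (-n)‖ = ‖pochN (1 - b) n‖⁻¹ := by
  have hn : NonInt (b - n) := by simpa [sub_eq_add_neg] using h.add_int (-n)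
  have h1 : pochZ b (-n) = (pochN (b - n) n)⁻¹ := by
    have := Gamma_add_nat hn n
    rw [sub_add_cancel] at this
    rw [pochZ, this, Int.cast_neg, Int.cast_natCast, ← sub_eq_add_neg]
    field_simp [hn.Gamma_ne_zero, pochN_ne_zero hn n]
  rw [h1, norm_inv]
  cases n with
  | zero => simp [pochN_zero]
  | succ n =>
    rw [show b - (n + 1 : ℕ) = -(1 - b) - n by push_cast; ring, pochN_reverse]
    simp

/-- The factorials in `(b₁)ₙ` and `(b₂)₋ₙ` cancel up to an exponential factor. -/
lemma exists_pochZ_mul_le {b₁ b₂ : ℂ} (h₁ : NonInt b₁) (h₂ : NonInt b₂) :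
    ∃ L : ℝ, 1 ≤ L ∧ ∀ n : ℕ, ‖pochZ b₁ n‖ * ‖pochZ b₂ (-n)‖ ≤ L ^ n := by
  have h2' : NonInt (1 - b₂) := by simpa [sub_eq_add_neg] using h₂.neg.one_add
  obtain ⟨K, hK, hb⟩ := h2'.exists_factorial_div_le
  have hB : 1 ≤ ‖b₁‖ + 1 := by simp
  refine ⟨(‖b₁‖ + 1) * K, one_le_mul_of_one_le_of_one_le hB hK, fun n => ?_⟩
  rw [pochZ_natCast h₁, norm_pochZ_neg h₂]
  calc _ ≤ (‖b₁‖ + 1) ^ n * n.factorial * ‖pochN (1 - b₂) n‖⁻¹ := by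
        gcongr; apply norm_pochN_le
    _ = (‖b₁‖ + 1) ^ n * (n.factorial / ‖pochN (1 - b₂) n‖) := by ring
    _ ≤ (‖b₁‖ + 1) ^ n * K ^ n := by gcongr; exact hb n
    _ = _ := by rw [mul_pow]

lemma exists_radius_gamma1 (a : ℂ) {b₁ b₂ : ℂ} (h₁ : NonInt b₁) (h₂ : NonInt b₂) :
    ∃ ε : ℝ, 0 < ε ∧ ∀ x y : ℂ, ‖x‖ < ε → ‖y‖ < ε →
      Summable fun p => ‖hornGamma1Term a b₁ b₂ x y p‖ := by
  obtain ⟨L, hL, hb⟩ := exists_pochZ_mul_le h₁ h₂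
  obtain ⟨L', hL', hb'⟩ := exists_pochZ_mul_le h₂ h₁
  have hA : 1 ≤ ‖a‖ + 1 := by simp
  have hLL : 1 ≤ L * L' := one_le_mul_of_one_le_of_one_le hL hL'
  refine exists_radius (R := (‖a‖ + 1) * (L * L')) (fun x y p => by simp [hornGamma1Term])
    (one_le_mul_of_one_le_of_one_le hA hLL) ?_
  rintro ⟨m, n⟩
  have hm : (0 : ℝ) < m.factorial := by exact_mod_cast Nat.factorial_pos m
  have hn : (1 : ℝ) ≤ n.factorial := by exact_mod_cast Nat.factorial_pos n
  have hZ : ‖pochZ b₁ ((n : ℤ) - m)‖ * ‖pochZ b₂ ((m : ℤ) - n)‖ ≤ (L * L') ^ (m + n) := by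
    have aux : ∀ (M : ℝ), 1 ≤ M → M ≤ L * L' → ∀ k ≤ m + n, M ^ k ≤ (L * L') ^ (m + n) :=
      fun M h1 h2 k hk => (pow_le_pow_left₀ (by linarith) h2 k).trans (pow_le_pow_right₀ hLL hk)
    rcases le_total m n with h | h
    · obtain ⟨k, rfl⟩ := Nat.exists_eq_add_of_le h
      have := hb k
      rw [show ((m + k : ℕ) : ℤ) - m = k by push_cast; ring,
        show (m : ℤ) - (m + k : ℕ) = -k by push_cast; ring]
      exact this.trans (aux L hL (by nlinarith) k (by omega))
    · obtain ⟨k, rfl⟩ := Nat.exists_eq_add_of_le h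
      have := hb' k
      rw [show ((n + k : ℕ) : ℤ) - n = k by push_cast; ring,
        show (n : ℤ) - (n + k : ℕ) = -k by push_cast; ring, mul_comm]
      exact this.trans (aux L' hL' (by nlinarith) k (by omega))
  simp only [hornGamma1Term, one_pow, mul_one, norm_div, norm_mul, Complex.norm_natCast]
  calc _ ≤ ((‖a‖ + 1) ^ m * m.factorial) * ‖pochZ b₁ ((n : ℤ) - m)‖ *
          ‖pochZ b₂ ((m : ℤ) - n)‖ / (m.factorial * n.factorial) := by
        gcongr; apply norm_pochN_le
    _ = (‖a‖ + 1) ^ m * (‖pochZ b₁ ((n : ℤ) - m)‖ * ‖pochZ b₂ ((m : ℤ) - n)‖) / n.factorial := by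
        field_simp
    _ ≤ (‖a‖ + 1) ^ m * (‖pochZ b₁ ((n : ℤ) - m)‖ * ‖pochZ b₂ ((m : ℤ) - n)‖) :=
        div_le_self (by positivity) hn
    _ ≤ (‖a‖ + 1) ^ (m + n) * (L * L') ^ (m + n) := by
        gcongr
        omega
    _ = _ := by rw [mul_pow (‖a‖ + 1)]

/-! ### Summation of the coefficients -/

/-- The Cauchy product of two absolutely convergent double series. -/
lemma hasSum_cauchy {F G : ℕ × ℕ → ℂ} (hF : Summable fun p => ‖F p‖)
    (hG : Summable fun p => ‖G p‖) :
    HasSum (fun p : ℕ × ℕ => cauchy F G p.1 p.2) ((∑' p, F p) * ∑' p, G p) := by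
  -- pairs of indices with given sum are pairs of pairs with given sums, coordinatewise
  let _ : HasAntidiagonal (ℕ × ℕ) :=
    { antidiagonal := fun p => (antidiagonal p.1 ×ˢ antidiagonal p.2).map
        (Equiv.prodProdProdComm ℕ ℕ ℕ ℕ).toEmbedding
      mem_antidiagonal := by
        rintro ⟨M, N⟩ ⟨⟨a, b⟩, ⟨a', b'⟩⟩
        simp [mem_map_equiv, Equiv.prodProdProdComm] }
  have key : ∀ p : ℕ × ℕ, cauchy F G p.1 p.2 =
      ∑ kl ∈ antidiagonal p, F kl.1 * G kl.2 := by
    intro p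
    change _ = ∑ kl ∈ (antidiagonal p.1 ×ˢ antidiagonal p.2).map
        (Equiv.prodProdProdComm ℕ ℕ ℕ ℕ).toEmbedding, F kl.1 * G kl.2
    rw [sum_map, sum_product]
    rfl
  have hs := summable_mul_of_summable_norm hF hG
  simp only [key]
  rw [hF.of_norm.tsum_mul_tsum_eq_tsum_sum_antidiagonal hG.of_norm hs]
  exact (summable_sum_mul_antidiagonal_of_summable_mul hs).hasSum

/-- Weighted homogeneity: a monomial scaling of the terms scales the Cauchy product. -/
lemma cauchy_scale {F G F' G' : ℕ × ℕ → ℂ} {x y : ℂ}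
    (hF : ∀ p, F p = F' p * (x ^ p.1 * y ^ p.2)) (hG : ∀ p, G p = G' p * (x ^ p.1 * y ^ p.2))
    (M N : ℕ) : cauchy F G M N = cauchy F' G' M N * (x ^ M * y ^ N) := by
  simp only [cauchy, sum_mul]
  refine sum_congr rfl fun i hi => sum_congr rfl fun j hj => ?_
  rw [← mem_antidiagonal.1 hi, ← mem_antidiagonal.1 hj, hF, hG, pow_add, pow_add]
  ring

lemma cauchy_zero {F G : ℕ × ℕ → ℂ} : cauchy F G 0 0 = F (0, 0) * G (0, 0) := by
  simp [cauchy]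

/-- If the coefficients of `z ^ a * w ^ b` in a combination of double power series in `(z * w, w)`,
`(z, z * w)` and `(z, w)` cancel for `(a, b) ≠ (0, 0)`, then the combination is constant. -/
lemma combine {C₁ C₂ C₃ : ℕ → ℕ → ℂ} {α β δ κ z w S₁ S₂ S₃ : ℂ}
    (hlt : ∀ a D, α * C₂ a (D + 1) + δ * C₃ a (a + (D + 1)) = 0)
    (hgt : ∀ b D, β * C₁ (D + 1) b + δ * C₃ (b + (D + 1)) b = 0)
    (hdiag : ∀ A, α * C₂ (A + 1) 0 + β * C₁ 0 (A + 1) + δ * C₃ (A + 1) (A + 1) = 0)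
    (h0 : α * C₂ 0 0 + β * C₁ 0 0 + δ * C₃ 0 0 = κ)
    (H₂ : HasSum (fun p : ℕ × ℕ => C₂ p.1 p.2 * ((z * w) ^ p.1 * w ^ p.2)) S₂)
    (H₁ : HasSum (fun p : ℕ × ℕ => C₁ p.1 p.2 * (z ^ p.1 * (z * w) ^ p.2)) S₁)
    (H₃ : HasSum (fun p : ℕ × ℕ => C₃ p.1 p.2 * (z ^ p.1 * w ^ p.2)) S₃) :
    κ = α * S₂ + β * S₁ + δ * S₃ := by
  -- `f₂` and `f₁` send a summation index to the exponents of its monomial in `z` and `w`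
  let f₂ : ℕ × ℕ → ℕ × ℕ := fun p => (p.1, p.1 + p.2)
  let f₁ : ℕ × ℕ → ℕ × ℕ := fun p => (p.1 + p.2, p.2)
  have i₂ : Function.Injective f₂ := by
    rintro ⟨a, b⟩ ⟨a', b'⟩ h
    simp only [f₂, Prod.mk.injEq] at h ⊢
    omega
  have i₁ : Function.Injective f₁ := by
    rintro ⟨a, b⟩ ⟨a', b'⟩ h
    simp only [f₁, Prod.mk.injEq] at h ⊢
    omega
  have e₂ := fun p : ℕ × ℕ =>
    i₂.extend_apply (fun p : ℕ × ℕ => C₂ p.1 p.2 * ((z * w) ^ p.1 * w ^ p.2)) 0 p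
  have e₁ := fun p : ℕ × ℕ =>
    i₁.extend_apply (fun p : ℕ × ℕ => C₁ p.1 p.2 * (z ^ p.1 * (z * w) ^ p.2)) 0 p
  have key := (((hasSum_extend_zero i₂).2 H₂).mul_left α).add
    (((hasSum_extend_zero i₁).2 H₁).mul_left β) |>.add (H₃.mul_left δ)
  refine (hasSum_ite_eq ((0, 0) : ℕ × ℕ) κ).unique (Eq.subst (motive := fun F => HasSum F _) (funext ?_) key)
  rintro ⟨a, b⟩
  symm
  rcases lt_trichotomy a b with hab | hab | hab
  · obtain ⟨D, rfl⟩ := Nat.exists_eq_add_of_lt hab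
    have n₁ : ¬ ∃ p, f₁ p = (a, a + D + 1) := by
      rintro ⟨p, hp⟩
      simp only [f₁, Prod.mk.injEq] at hp
      omega
    rw [if_neg (by simp), Function.extend_apply' _ _ _ n₁,
      show (a, a + D + 1) = f₂ (a, D + 1) from rfl, e₂]
    simp only [f₂, Pi.zero_apply]
    linear_combination (-(z ^ a * w ^ (a + (D + 1)))) * hlt a D
  · subst hab
    have E₂ := e₂ (a, 0)
    have E₁ := e₁ (0, a)
    simp only [f₂, f₁, add_zero, zero_add] at E₂ E₁
    rw [E₂, E₁]
    rcases a with _ | A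
    · simpa using h0.symm
    · rw [if_neg (by simp)]
      linear_combination (-(z * w) ^ (A + 1)) * hdiag A
  · obtain ⟨D, rfl⟩ := Nat.exists_eq_add_of_lt hab
    have n₂ : ¬ ∃ p, f₂ p = (b + D + 1, b) := by
      rintro ⟨p, hp⟩
      simp only [f₂, Prod.mk.injEq] at hp
      omega
    have E₁ := e₁ (D + 1, b)
    simp only [f₁, show D + 1 + b = b + D + 1 by omega] at E₁
    rw [if_neg (by simp), Function.extend_apply' _ _ _ n₂, E₁]
    simp only [Pi.zero_apply]
    linear_combination (-(z ^ (b + (D + 1)) * w ^ b)) * hgt b D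

/-- The quadratic relation in the parameters `g = γ₁`, `h = γ₂`, `e = γ₁ + γ₂ - c`, `f = c - γ₁`. -/
lemma relation {g h e f c z w : ℂ} (hg : NonInt g) (hh : NonInt h) (he : NonInt e)
    (hf : NonInt f) (hc : NonInt c) (hfe : f + e = h) (hgf : g + f = c)
    (s₁ : Summable fun p => ‖hornPhi2Term g h (1 + e) (-(z * w)) (-w) p‖)
    (s₂ : Summable fun p => ‖hornPhi2Term (-g) (-h) (1 - e) (z * w) w p‖)
    (s₃ : Summable fun p => ‖hornPhi1Term c h (1 + f) z (-(z * w)) p‖)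
    (s₄ : Summable fun p => ‖hornPhi1Term (-c) (-h) (1 - f) z (z * w) p‖)
    (s₅ : Summable fun p => ‖hornGamma1Term g f e (-z) w p‖)
    (s₆ : Summable fun p => ‖hornGamma1Term (-g) (-f) (-e) (-z) (-w) p‖) :
    e * f = -(c * f) * (hornPhi2 g h (1 + e) (-(z * w)) (-w) *
          hornPhi2 (-g) (-h) (1 - e) (z * w) w)
      + -(g * e) * (hornPhi1 c h (1 + f) z (-(z * w)) * hornPhi1 (-c) (-h) (1 - f) z (z * w))
      + c * h * (hornGamma1 g f e (-z) w * hornGamma1 (-g) (-f) (-e) (-z) (-w)) := by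
  have H₂ := hasSum_cauchy s₁ s₂
  have H₁ := hasSum_cauchy s₃ s₄
  have H₃ := hasSum_cauchy s₅ s₆
  simp only [cauchy_scale (F := hornPhi2Term g h (1 + e) (-(z * w)) (-w))
    (G := hornPhi2Term (-g) (-h) (1 - e) (z * w) w)
    (F' := hornPhi2Term g h (1 + e) (-1) (-1))
    (G' := hornPhi2Term (-g) (-h) (1 - e) 1 1) (x := z * w) (y := w)
    (fun p => by simp only [hornPhi2Term]; rw [neg_pow, neg_pow w]; ring)
    (fun p => by simp only [hornPhi2Term, one_pow]; ring)] at H₂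
  simp only [cauchy_scale (F := hornPhi1Term c h (1 + f) z (-(z * w)))
    (G := hornPhi1Term (-c) (-h) (1 - f) z (z * w))
    (F' := hornPhi1Term c h (1 + f) 1 (-1))
    (G' := hornPhi1Term (-c) (-h) (1 - f) 1 1) (x := z) (y := z * w)
    (fun p => by simp only [hornPhi1Term, one_pow]; rw [neg_pow (z * w)]; ring)
    (fun p => by simp only [hornPhi1Term, one_pow]; ring)] at H₁
  simp only [cauchy_scale (F := hornGamma1Term g f e (-z) w)
    (G := hornGamma1Term (-g) (-f) (-e) (-z) (-w))
    (F' := hornGamma1Term g f e (-1) 1)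
    (G' := hornGamma1Term (-g) (-f) (-e) (-1) (-1)) (x := z) (y := w)
    (fun p => by simp only [hornGamma1Term, one_pow]; rw [neg_pow z]; ring)
    (fun p => by simp only [hornGamma1Term]; rw [neg_pow z, neg_pow w]; ring)] at H₃
  refine combine ?_ ?_ ?_ ?_ H₂ H₁ H₃
  · intro a D
    linear_combination c * coeff_lt (g := g) hh he hf hfe a D
  · exact coeff_gt hg hh he hf hc hfe hgf
  · exact coeff_diag hg he hf hc hfe hgf
  · have z₁ : ∀ {b : ℂ}, NonInt b → pochZ b 0 = 1 := fun hb => by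
      simp [pochZ, hb.Gamma_ne_zero]
    simp [cauchy_zero, hornPhi2Term, hornPhi1Term, hornGamma1Term, pochN_zero, z₁ he, z₁ hf,
      z₁ he.neg, z₁ hf.neg]
    rw [← hfe, ← hgf]
    ring

end

theorem hornPhi1_quadratic_relation (γ₁ γ₂ c : ℂ)
    (h1 : ∀ m : ℤ, γ₁ ≠ (m : ℂ)) (h2 : ∀ m : ℤ, γ₂ ≠ (m : ℂ))
    (h3 : ∀ m : ℤ, c ≠ (m : ℂ)) (h4 : ∀ m : ℤ, c - γ₁ ≠ (m : ℂ))
    (h5 : ∀ m : ℤ, γ₁ + γ₂ - c ≠ (m : ℂ)) :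
    ∃ ε : ℝ, 0 < ε ∧ ∀ z w : ℂ, ‖z‖ < ε → ‖w‖ < ε →
      (Summable fun p : ℕ × ℕ =>
        ‖hornPhi2Term γ₁ γ₂ (1 + γ₁ + γ₂ - c) (-(z * w)) (-w) p‖) ∧
      (Summable fun p : ℕ × ℕ =>
        ‖hornPhi2Term (-γ₁) (-γ₂) (1 - γ₁ - γ₂ + c) (z * w) w p‖) ∧
      (Summable fun p : ℕ × ℕ => ‖hornPhi1Term c γ₂ (1 + c - γ₁) z (-(z * w)) p‖) ∧
      (Summable fun p : ℕ × ℕ => ‖hornPhi1Term (-c) (-γ₂) (1 - c + γ₁) z (z * w) p‖) ∧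
      (Summable fun p : ℕ × ℕ => ‖hornGamma1Term γ₁ (c - γ₁) (γ₁ + γ₂ - c) (-z) w p‖) ∧
      (Summable fun p : ℕ × ℕ =>
        ‖hornGamma1Term (-γ₁) (-c + γ₁) (-γ₁ - γ₂ + c) (-z) (-w) p‖) ∧
      (c - γ₁ - γ₂) * (γ₁ - c)
        = c * (γ₁ - c) *
            hornPhi2 γ₁ γ₂ (1 + γ₁ + γ₂ - c) (-(z * w)) (-w) *
            hornPhi2 (-γ₁) (-γ₂) (1 - γ₁ - γ₂ + c) (z * w) w
          + γ₁ * (c - γ₁ - γ₂) *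
            hornPhi1 c γ₂ (1 + c - γ₁) z (-(z * w)) *
            hornPhi1 (-c) (-γ₂) (1 - c + γ₁) z (z * w)
          + c * γ₂ *
            hornGamma1 γ₁ (c - γ₁) (γ₁ + γ₂ - c) (-z) w *
            hornGamma1 (-γ₁) (-c + γ₁) (-γ₁ - γ₂ + c) (-z) (-w) := by
  have hg : NonInt γ₁ := h1
  have hh : NonInt γ₂ := h2
  have hc : NonInt c := h3
  have hf : NonInt (c - γ₁) := h4
  have he : NonInt (γ₁ + γ₂ - c) := h5
  set e := γ₁ + γ₂ - c with he'
  set f := c - γ₁ with hf'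
  have q₁ : 1 + γ₁ + γ₂ - c = 1 + e := by rw [he']; ring
  have q₂ : 1 - γ₁ - γ₂ + c = 1 - e := by rw [he']; ring
  have q₃ : 1 + c - γ₁ = 1 + f := by rw [hf']; ring
  have q₄ : 1 - c + γ₁ = 1 - f := by rw [hf']; ring
  have q₅ : -c + γ₁ = -f := by rw [hf']; ring
  have q₆ : -γ₁ - γ₂ + c = -e := by rw [he']; ring
  have q₇ : c - γ₁ - γ₂ = -e := by rw [he']; ring
  have q₈ : γ₁ - c = -f := by rw [hf']; ring
  rw [q₁, q₂, q₃, q₄, q₅, q₆, q₇, q₈]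
  obtain ⟨ε₁, p₁, S₁⟩ := exists_radius_phi2 γ₁ γ₂ he.one_add
  obtain ⟨ε₂, p₂, S₂⟩ := exists_radius_phi2 (-γ₁) (-γ₂) he.neg.one_add
  obtain ⟨ε₃, p₃, S₃⟩ := exists_radius_phi1 c γ₂ hf.one_add
  obtain ⟨ε₄, p₄, S₄⟩ := exists_radius_phi1 (-c) (-γ₂) hf.neg.one_add
  obtain ⟨ε₅, p₅, S₅⟩ := exists_radius_gamma1 γ₁ hf he
  obtain ⟨ε₆, p₆, S₆⟩ := exists_radius_gamma1 (-γ₁) hf.neg he.neg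
  rw [← sub_eq_add_neg] at S₂ S₄
  -- the bound by `1` gives `‖z * w‖ ≤ ‖w‖`
  refine ⟨min 1 (min ε₁ (min ε₂ (min ε₃ (min ε₄ (min ε₅ ε₆))))), by positivity,
    fun z w hz hw => ?_⟩
  simp only [lt_min_iff] at hz hw
  obtain ⟨z₀, z₁, z₂, z₃, z₄, z₅, z₆⟩ := hz
  obtain ⟨-, w₁, w₂, w₃, w₄, w₅, w₆⟩ := hw
  have hzw : ‖z * w‖ ≤ ‖w‖ := by
    rw [norm_mul]
    exact mul_le_of_le_one_left (norm_nonneg _) z₀.le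
  have t₁ := S₁ (-(z * w)) (-w) (by rw [norm_neg]; linarith) (by rwa [norm_neg])
  have t₂ := S₂ (z * w) w (by linarith) w₂
  have t₃ := S₃ z (-(z * w)) z₃ (by rw [norm_neg]; linarith)
  have t₄ := S₄ z (z * w) z₄ (by linarith)
  have t₅ := S₅ (-z) w (by rwa [norm_neg]) w₅
  have t₆ := S₆ (-z) (-w) (by rwa [norm_neg]) (by rwa [norm_neg])
  refine ⟨t₁, t₂, t₃, t₄, t₅, t₆, ?_⟩
  linear_combination relation hg hh he hf hc (by rw [he', hf']; ring) (by rw [hf']; ring)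
    t₁ t₂ t₃ t₄ t₅ t₆
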